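/- Let D = (0,1)^d and let K : D̄ × D̄ → ℝ be measurable with K(x,·) ∈ L²(D) for every x, satisfying ‖K(x,·) − K(z,·)‖_{L²(D)} ≤ C_K |x − z|^β for all x, z ∈ D̄ for some constants C_K, β > 0, K(x,y) = 0 for almost every y ∈ D whenever x ∈ ∂D, and Λ := sup_{x∈D̄} ‖K(x,·)‖_{L²(D)} < ∞. Let F : ℝ → ℝ be L-Lipschitz with ΛL < 1, and let g ∈ L²(D). Then for every η ∈ 𝒞₀(D̄) there exists a unique u ∈ 𝒞₀(D̄) such that u(x) = −∫_D K(x,y) F(u(y)) dy + ∫_D K(x,y) g(y) dy + η(x) for every x ∈ D̄. -/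

import Mathlib

open MeasureTheory

noncomputable section

/-- The open unit cube `D = (0,1)^d ⊆ ℝ^d`. -/
def openCube (d : ℕ) : Set (Fin d → ℝ) := Set.univ.pi fun _ => Set.Ioo (0 : ℝ) 1

/-- The closed unit cube `D̄ = [0,1]^d ⊆ ℝ^d`. -/
def closedCube (d : ℕ) : Set (Fin d → ℝ) := Set.Icc 0 1

/-- The boundary `∂D = D̄ \ D` of the unit cube. -/
def cubeBoundary (d : ℕ) : Set (Fin d → ℝ) := closedCube d \ openCube d

/-- Lebesgue measure on `D = (0,1)^d` (the reference measure for `L²(D)`). -/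
def cubeMeasure (d : ℕ) : Measure (Fin d → ℝ) := volume.restrict (openCube d)

/-- The Euclidean norm on `ℝ^d`. -/
def euclidNorm {d : ℕ} (v : Fin d → ℝ) : ℝ := Real.sqrt (∑ i, v i ^ 2)

lemma aux_cs {α : Type*} [MeasurableSpace α] {μ : Measure α} {k h : α → ℝ}
    (hk : MemLp k 2 μ) (hh : MemLp h 2 μ) {A B : ℝ} (hA : 0 ≤ A) (hB : 0 ≤ B)
    (hkA : eLpNorm k 2 μ ≤ ENNReal.ofReal A) (hhB : eLpNorm h 2 μ ≤ ENNReal.ofReal B) :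
    |∫ y, k y * h y ∂μ| ≤ A * B := by
  have h1 : eLpNorm (k • h) 1 μ ≤ eLpNorm k 2 μ * eLpNorm h 2 μ :=
    eLpNorm_smul_le_mul_eLpNorm (p := 2) (q := 2) (r := 1) hh.1 hk.1
  have h2 : ‖∫ y, k y * h y ∂μ‖ₑ ≤ ENNReal.ofReal (A * B) := by
    refine (enorm_integral_le_lintegral_enorm _).trans ?_
    rw [eLpNorm_one_eq_lintegral_enorm] at h1
    refine h1.trans ?_
    rw [ENNReal.ofReal_mul hA]
    gcongr
  rw [← Real.norm_eq_abs]
  rw [← ofReal_norm] at h2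
  exact (ENNReal.ofReal_le_ofReal_iff (by positivity)).1 h2

lemma aux_int {α : Type*} [MeasurableSpace α] {μ : Measure α} {k h : α → ℝ}
    (hk : MemLp k 2 μ) (hh : MemLp h 2 μ) : Integrable (fun y => k y * h y) μ :=
  hk.integrable_mul hh

lemma aux_sub (d : ℕ) : openCube d ⊆ closedCube d := by
  intro x hx
  exact ⟨fun i => (hx i trivial).1.le, fun i => (hx i trivial).2.le⟩

lemma aux_open (d : ℕ) : MeasurableSet (openCube d) :=
  MeasurableSet.univ_pi fun _ => measurableSet_Ioo

lemma aux_vol (d : ℕ) : cubeMeasure d Set.univ = 1 := by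
  simp [cubeMeasure, openCube, Real.volume_pi_Ioo]

lemma aux_norm (d : ℕ) {h : (Fin d → ℝ) → ℝ} {B : ℝ}
    (hB : ∀ y ∈ closedCube d, |h y| ≤ B) :
    eLpNorm h 2 (cubeMeasure d) ≤ ENNReal.ofReal B := by
  have := eLpNorm_le_of_ae_bound (p := 2) (μ := cubeMeasure d) (f := h) (C := B) (by
    unfold cubeMeasure
    filter_upwards [ae_restrict_mem (aux_open d)] with y hy
    exact hB y (aux_sub d hy))
  simpa [aux_vol] using this

lemma aux_memLp (d : ℕ) {h : (Fin d → ℝ) → ℝ} (hc : ContinuousOn h (closedCube d)) :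
    MemLp h 2 (cubeMeasure d) := by
  refine ⟨(hc.mono (aux_sub d)).aestronglyMeasurable (aux_open d), ?_⟩
  obtain ⟨B, hB⟩ := (isCompact_Icc : IsCompact (closedCube d)).exists_bound_of_continuousOn hc
  exact (aux_norm d hB).trans_lt ENNReal.ofReal_lt_top

lemma aux_cont (d : ℕ) (K : (Fin d → ℝ) → (Fin d → ℝ) → ℝ)
    (hKL2 : ∀ x ∈ closedCube d, MemLp (K x) 2 (cubeMeasure d))
    (CK β : ℝ) (hCK : 0 < CK) (hβ : 0 < β)
    (hKHolder : ∀ x ∈ closedCube d, ∀ z ∈ closedCube d,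
      eLpNorm (fun y => K x y - K z y) 2 (cubeMeasure d)
        ≤ ENNReal.ofReal (CK * euclidNorm (x - z) ^ β))
    (h : (Fin d → ℝ) → ℝ) (hh : MemLp h 2 (cubeMeasure d)) :
    ContinuousOn (fun x => ∫ y, K x y * h y ∂(cubeMeasure d)) (closedCube d) := by
  intro z hz
  have hb : ∀ x ∈ closedCube d,
      dist (∫ y, K x y * h y ∂(cubeMeasure d)) (∫ y, K z y * h y ∂(cubeMeasure d)) ≤
      CK * euclidNorm (x - z) ^ β * (eLpNorm h 2 (cubeMeasure d)).toReal := by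
    intro x hx
    rw [Real.dist_eq, ← integral_sub (aux_int (hKL2 x hx) hh)
      (aux_int (hKL2 z hz) hh)]
    simp_rw [← sub_mul]
    refine aux_cs (k := fun y => K x y - K z y) ((hKL2 x hx).sub (hKL2 z hz)) hh ?_
      ENNReal.toReal_nonneg (hKHolder x hx z hz) ?_
    · exact mul_nonneg hCK.le (Real.rpow_nonneg (Real.sqrt_nonneg _) _)
    · rw [ENNReal.ofReal_toReal hh.2.ne]
  have hc : Continuous fun x : Fin d → ℝ =>
      CK * euclidNorm (x - z) ^ β * (eLpNorm h 2 (cubeMeasure d)).toReal := by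
    have : Continuous fun x : Fin d → ℝ => euclidNorm (x - z) := by
      unfold euclidNorm
      fun_prop
    exact (continuous_const.mul (this.rpow_const fun _ => Or.inr hβ.le)).mul continuous_const
  have h0 : Filter.Tendsto (fun x : Fin d → ℝ =>
      CK * euclidNorm (x - z) ^ β * (eLpNorm h 2 (cubeMeasure d)).toReal)
      (nhdsWithin z (closedCube d)) (nhds 0) := by
    have := (hc.tendsto z).mono_left (nhdsWithin_le_nhds (s := closedCube d))
    simpa [euclidNorm, Real.zero_rpow hβ.ne'] using this
  refine tendsto_iff_dist_tendsto_zero.2 ?_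
  refine squeeze_zero' (Filter.Eventually.of_forall fun _ => dist_nonneg) ?_ h0
  filter_upwards [self_mem_nhdsWithin] with x hx using hb x hx

/-- If `K` is `L²`-Hölder in its first variable, vanishes (a.e.) on the
boundary, has `Λ = sup_x ‖K(x,·)‖_{L²} < ∞`, and `F` is `L`-Lipschitz with `ΛL < 1`,
then for every `η ∈ 𝒞₀(D̄)` and `g ∈ L²(D)` there is a unique `u ∈ 𝒞₀(D̄)` with
`u(x) = −∫_D K(x,y)F(u(y))dy + ∫_D K(x,y)g(y)dy + η(x)` on `D̄` (uniqueness meaning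
any two such solutions agree on `D̄`). -/
theorem stmt15 (d : ℕ) (hd : 0 < d)
    (K : (Fin d → ℝ) → (Fin d → ℝ) → ℝ) (hKmeas : Measurable (Function.uncurry K))
    (hKL2 : ∀ x ∈ closedCube d, MemLp (K x) 2 (cubeMeasure d))
    (CK β : ℝ) (hCK : 0 < CK) (hβ : 0 < β)
    (hKHolder : ∀ x ∈ closedCube d, ∀ z ∈ closedCube d,
      eLpNorm (fun y => K x y - K z y) 2 (cubeMeasure d)
        ≤ ENNReal.ofReal (CK * euclidNorm (x - z) ^ β))
    (hKbdry : ∀ x ∈ cubeBoundary d, ∀ᵐ y ∂(cubeMeasure d), K x y = 0)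
    (Λ : ℝ) (hΛ : ∀ x ∈ closedCube d, eLpNorm (K x) 2 (cubeMeasure d) ≤ ENNReal.ofReal Λ)
    (L : ℝ) (hL : 0 ≤ L) (F : ℝ → ℝ) (hFLip : ∀ s t : ℝ, |F s - F t| ≤ L * |s - t|)
    (hΛL : Λ * L < 1)
    (g : (Fin d → ℝ) → ℝ) (hg : MemLp g 2 (cubeMeasure d))
    (η : (Fin d → ℝ) → ℝ) (hη : ContinuousOn η (closedCube d))
    (hη0 : ∀ x ∈ cubeBoundary d, η x = 0) :
    ∃ u : (Fin d → ℝ) → ℝ,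
      (ContinuousOn u (closedCube d) ∧ ∀ x ∈ cubeBoundary d, u x = 0) ∧
      (∀ x ∈ closedCube d,
        u x = -(∫ y, K x y * F (u y) ∂(cubeMeasure d)) +
            (∫ y, K x y * g y ∂(cubeMeasure d)) + η x) ∧
      ∀ u' : (Fin d → ℝ) → ℝ,
        (ContinuousOn u' (closedCube d) ∧ ∀ x ∈ cubeBoundary d, u' x = 0) →
        (∀ x ∈ closedCube d,
          u' x = -(∫ y, K x y * F (u' y) ∂(cubeMeasure d)) +
              (∫ y, K x y * g y ∂(cubeMeasure d)) + η x) →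
        Set.EqOn u' u (closedCube d) := by
  set μ := cubeMeasure d with hμ
  -- replace Λ by a nonnegative constant
  obtain ⟨M, hM0, hM, hML⟩ : ∃ M : ℝ, 0 ≤ M ∧
      (∀ x ∈ closedCube d, eLpNorm (K x) 2 μ ≤ ENNReal.ofReal M) ∧ M * L < 1 := by
    refine ⟨max Λ 0, le_max_right _ _, fun x hx => (hΛ x hx).trans
      (ENNReal.ofReal_le_ofReal (le_max_left _ _)), ?_⟩
    rcases max_choice Λ 0 with h | h <;> rw [h]
    · exact hΛL
    · simp
  have hF : Continuous F := by
    have : LipschitzWith ⟨L, hL⟩ F := LipschitzWith.of_dist_le_mul fun s t => hFLip s t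
    exact this.continuous
  have hFm : ∀ {v : (Fin d → ℝ) → ℝ}, ContinuousOn v (closedCube d) →
      MemLp (fun y => F (v y)) 2 μ := fun hv => aux_memLp d (hF.comp_continuousOn hv)
  let Φ : ((Fin d → ℝ) → ℝ) → (Fin d → ℝ) → ℝ := fun v x =>
    -(∫ y, K x y * F (v y) ∂μ) + (∫ y, K x y * g y ∂μ) + η x
  have hΦc : ∀ v, ContinuousOn v (closedCube d) → ContinuousOn (Φ v) (closedCube d) := by
    intro v hv
    exact ((aux_cont d K hKL2 CK β hCK hβ hKHolder _ (hFm hv)).neg.add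
      (aux_cont d K hKL2 CK β hCK hβ hKHolder _ hg)).add hη
  have hΦb : ∀ v, ∀ x ∈ cubeBoundary d, Φ v x = 0 := by
    intro v x hx
    have h1 : ∀ h : (Fin d → ℝ) → ℝ, ∫ y, K x y * h y ∂μ = 0 := fun h =>
      integral_eq_zero_of_ae (by
        filter_upwards [hKbdry x hx] with y hy
        simp [hy])
    simp only [Φ]
    rw [h1 (fun y => F (v y)), h1 g, hη0 x hx]
    simp
  have hΦd : ∀ v w, ContinuousOn v (closedCube d) → ContinuousOn w (closedCube d) →
      ∀ B : ℝ, 0 ≤ B → (∀ y ∈ closedCube d, |v y - w y| ≤ B) →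
      ∀ x ∈ closedCube d, |Φ v x - Φ w x| ≤ M * L * B := by
    intro v w hv hw B hB hvw x hx
    have e : Φ v x - Φ w x = -∫ y, K x y * (F (v y) - F (w y)) ∂μ := by
      simp_rw [mul_sub]
      rw [integral_sub (aux_int (hKL2 x hx) (hFm hv))
        (aux_int (hKL2 x hx) (hFm hw))]
      simp only [Φ]
      ring
    rw [e, abs_neg, mul_assoc]
    refine aux_cs (hKL2 x hx) ((hFm hv).sub (hFm hw)) hM0 (mul_nonneg hL hB) (hM x hx)
      (aux_norm d fun y hy => ?_)
    exact (hFLip _ _).trans (mul_le_mul_of_nonneg_left (hvw y hy) hL)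
  have hcpt : IsCompact (closedCube d) := isCompact_Icc
  have : CompactSpace (closedCube d) := isCompact_iff_compactSpace.1 hcpt
  let E : C(closedCube d, ℝ) → (Fin d → ℝ) → ℝ := fun v => Function.extend Subtype.val v 0
  have hE : ∀ v (x : closedCube d), E v x = v x := fun v x =>
    Subtype.val_injective.extend_apply _ _ _
  have hEc : ∀ v, ContinuousOn (E v) (closedCube d) := fun v => by
    rw [continuousOn_iff_continuous_domRestrict]
    have : (closedCube d).domRestrict (E v) = v := funext fun x => hE v x
    rw [this]
    exact v.continuous
  let T : C(closedCube d, ℝ) → C(closedCube d, ℝ) := fun v =>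
    ⟨(closedCube d).domRestrict (Φ (E v)), (hΦc _ (hEc v)).domRestrict⟩
  have hT : ContractingWith ⟨M * L, mul_nonneg hM0 hL⟩ T := by
    refine ⟨by exact_mod_cast hML, LipschitzWith.of_dist_le_mul fun v w => ?_⟩
    refine (ContinuousMap.dist_le (mul_nonneg (mul_nonneg hM0 hL) dist_nonneg)).2 fun x => ?_
    rw [Real.dist_eq]
    refine hΦd _ _ (hEc v) (hEc w) _ dist_nonneg (fun y hy => ?_) x x.2
    rw [hE v ⟨y, hy⟩, hE w ⟨y, hy⟩, ← Real.dist_eq]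
    exact ContinuousMap.dist_apply_le_dist _
  obtain ⟨v, hv⟩ : ∃ v, T v = v := ⟨_, hT.fixedPoint_isFixedPt⟩
  have hfix : ∀ x ∈ closedCube d, E v x = Φ (E v) x := fun x hx => by
    rw [hE v ⟨x, hx⟩]
    exact (congrArg (fun f : C(closedCube d, ℝ) => f ⟨x, hx⟩) hv).symm
  refine ⟨E v, ⟨hEc v, fun x hx => by rw [hfix x hx.1, hΦb _ x hx]⟩, hfix, ?_⟩
  rintro u' ⟨hu', -⟩ hu'fix
  have hu'fix : ∀ x ∈ closedCube d, u' x = Φ u' x := hu'fix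
  have hne : (closedCube d).Nonempty := ⟨0, by simp [closedCube]⟩
  obtain ⟨x₀, hx₀, hmax⟩ := hcpt.exists_isMaxOn hne ((hu'.sub (hEc v)).abs)
  have hle := hΦd u' (E v) hu' (hEc v) |u' x₀ - E v x₀| (abs_nonneg _)
    (fun y hy => hmax hy) x₀ hx₀
  rw [← hu'fix x₀ hx₀, ← hfix x₀ hx₀] at hle
  have hz : |u' x₀ - E v x₀| = 0 := by
    by_contra hne
    have : 0 < |u' x₀ - E v x₀| := lt_of_le_of_ne (abs_nonneg _) (Ne.symm hne)
    nlinarith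
  intro x hx
  have h1 : |u' x - E v x| ≤ |u' x₀ - E v x₀| := hmax hx
  rw [hz] at h1
  exact sub_eq_zero.1 (abs_nonpos_iff.1 h1)
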